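/- Let 0 ≤ a < b ≤ 1 and define φ(s) = 1/(ξ_{[a,b]}(s)·ζ_{[a,b]}(s)) for s ∈ (a,b). Then the map s ↦ φ'(s)/s^{N−1} is strictly decreasing on (a,b); it has a unique zero s̄, this zero satisfies s̄ ∈ (a,b), and at s̄ the reflection law ξ'_{[a,b]}(s̄)/ξ_{[a,b]}(s̄) + ζ'_{[a,b]}(s̄)/ζ_{[a,b]}(s̄) = 0 holds. -/

import Mathlib

/-!
Write `X = ξ_{[a,b]}`, `Z = ζ_{[a,b]}`, `n = N - 1`, `p = X'/X`, `q = Z'/Z`. Both functions are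
combinations of `ξ` and `ζ`, so they solve `u'' = u - (n/r) u'`, and the Wronskian
`r ^ n (X' Z - X Z')` is a positive constant `c`. Hence `φ'/s ^ n = -(p + q)/(s ^ n X Z)`
equals `(q² - p²)/c`, and it suffices to know that `p > 0`, `q < 0` and that both are increasing.

* Signs: `(r ^ n u')' = r ^ n u > 0` for `u = X, Z`, while `r ^ n X' → 0` at `a` and
  `r ^ n Z' → 0` at `b`.
* Monotonicity: `u² (u'/u)' = u² - u'² - (n/r) u u'`. The function
  `r ^ n u² (u'/u)'` has derivative `n r ^ (n-2) u u'` (`hasDerivAt_energy`), so it increases for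
  `u = X` and decreases for `u = Z`; its limit at `a`, respectively `b`, is nonnegative, so it is
  positive on `(a,b)`.
* Zero: `r ^ n (X' Z + X Z')` equals `2 r ^ n X' Z - c`, with limit `-c` at `a`, and
  `2 r ^ n X Z' + c`, with limit `c` at `b`; so it vanishes somewhere.

`core` carries out this argument for abstract `X`, `Z`. The remaining work is to
control `deriv ξ` and `deriv ζ` at the end points `0` and `1`, where the two-sided derivative is
not a priori the one-sided one (`GreenData.continuousOn_deriv`).
-/

open Real Set Filter Topology

/-- Context: the two fundamental solutions `ξ`, `ζ` of `ℒu = -u'' - ((N-1)/r) u' + u = 0`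
on `(0,1)` together with their basic properties (Proposition 2.1 of the paper). -/
structure GreenData (N : ℕ) where
  xi : ℝ → ℝ
  zeta : ℝ → ℝ
  xi_smooth : ContDiffOn ℝ 2 xi (Set.Icc 0 1)
  zeta_smooth : ContDiffOn ℝ 2 zeta (Set.Ioc 0 1)
  xi_pos : ∀ r ∈ Set.Icc (0:ℝ) 1, 0 < xi r
  zeta_pos : ∀ r ∈ Set.Ioc (0:ℝ) 1, 0 < zeta r
  xi_ode : ∀ r ∈ Set.Ioo (0:ℝ) 1,
    -(deriv (deriv xi) r) - ((N : ℝ) - 1) / r * deriv xi r + xi r = 0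
  zeta_ode : ∀ r ∈ Set.Ioo (0:ℝ) 1,
    -(deriv (deriv zeta) r) - ((N : ℝ) - 1) / r * deriv zeta r + zeta r = 0
  xi_deriv_zero : deriv xi 0 = 0
  zeta_deriv_one : deriv zeta 1 = 0
  xi_mono : StrictMonoOn xi (Set.Icc 0 1)
  xi_bdd : ∃ M : ℝ, ∀ r ∈ Set.Icc (0:ℝ) 1, xi r ≤ M
  zeta_anti : StrictAntiOn zeta (Set.Ioc 0 1)
  wronskian : ∀ r ∈ Set.Ioc (0:ℝ) 1,
    r ^ (N - 1) * (deriv xi r * zeta r - xi r * deriv zeta r) = 1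
  xi_lim : Filter.Tendsto xi (nhdsWithin 0 (Set.Ioi 0)) (nhds (1 / ((N : ℝ) - 2)))
  zeta_lim : Filter.Tendsto (fun r => r ^ (N - 2) * zeta r)
    (nhdsWithin 0 (Set.Ioi 0)) (nhds 1)
  zeta_deriv_lim : Filter.Tendsto (fun r => r ^ (N - 1) * deriv zeta r)
    (nhdsWithin 0 (Set.Ioi 0)) (nhds (-((N : ℝ) - 2)))

namespace GreenData

variable {N : ℕ}

/-- The function `ξ_{[a,b]}` of the paper. -/
noncomputable def xiI (d : GreenData N) (a b : ℝ) : ℝ → ℝ :=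
  if a = 0 then
    (if b = 1 then d.xi else fun r => d.xi r / deriv d.xi b)
  else if b = 1 then
    fun r => deriv d.xi a * d.zeta r - d.xi r * deriv d.zeta a
  else
    fun r => (deriv d.xi a * d.zeta r - d.xi r * deriv d.zeta a) /
      Real.sqrt (deriv d.xi a * deriv d.zeta b - deriv d.xi b * deriv d.zeta a)

/-- The function `ζ_{[a,b]}` of the paper. -/
noncomputable def zetaI (d : GreenData N) (a b : ℝ) : ℝ → ℝ :=
  if a = 0 then
    (if b = 1 then d.zeta
     else fun r => deriv d.xi b * d.zeta r - d.xi r * deriv d.zeta b)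
  else if b = 1 then
    fun r => -(d.zeta r / deriv d.zeta a)
  else
    fun r => (deriv d.xi b * d.zeta r - d.xi r * deriv d.zeta b) /
      Real.sqrt (deriv d.xi a * deriv d.zeta b - deriv d.xi b * deriv d.zeta a)

/-- The reflection law `ξ'_{[a,b]}(s)/ξ_{[a,b]}(s) + ζ'_{[a,b]}(s)/ζ_{[a,b]}(s) = 0`. -/
def ReflectionAt (d : GreenData N) (a b s : ℝ) : Prop :=
  deriv (d.xiI a b) s / d.xiI a b s + deriv (d.zetaI a b) s / d.zetaI a b s = 0

/-- The Green function `G_{[a,b]}(r,s)`. -/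
noncomputable def G (d : GreenData N) (a b r s : ℝ) : ℝ :=
  if r ≤ s then s ^ (N - 1) * d.xiI a b r * d.zetaI a b s
  else s ^ (N - 1) * d.xiI a b s * d.zetaI a b r

end GreenData

/-- `sbar` is the function associating to `0 ≤ a < b ≤ 1` the unique point
`s̄(a,b) ∈ (a,b)` satisfying the reflection law. -/
def IsSBar {N : ℕ} (d : GreenData N) (sbar : ℝ → ℝ → ℝ) : Prop :=
  ∀ a b : ℝ, 0 ≤ a → a < b → b ≤ 1 →
    sbar a b ∈ Set.Ioo a b ∧ d.ReflectionAt a b (sbar a b) ∧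
    ∀ s ∈ Set.Ioo a b, d.ReflectionAt a b s → s = sbar a b

/-- The map `M_∞^{(j)}` of the paper, with `α_j = s̄(β_{j-1},β_j)`. -/
noncomputable def Minf {N : ℕ} (d : GreenData N) (sbar : ℝ → ℝ → ℝ)
    (β : ℕ → ℝ) (j : ℕ) : ℝ :=
  (1 / (β j) ^ (N - 1)) *
    (1 / (deriv d.xi (β j) * d.zeta (sbar (β j) (β (j + 1))) -
            d.xi (sbar (β j) (β (j + 1))) * deriv d.zeta (β j)) -
     1 / (deriv d.xi (β j) * d.zeta (sbar (β (j - 1)) (β j)) -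
            d.xi (sbar (β (j - 1)) (β j)) * deriv d.zeta (β j)))

/-- Extension of a `(k-1)`-tuple `(β₁,…,β_{k-1})` by the conventions `β₀ = 0`, `β_k = 1`. -/
noncomputable def extendB (k : ℕ) (β : Fin (k - 1) → ℝ) : ℕ → ℝ := fun j =>
  if hj : 1 ≤ j ∧ j ≤ k - 1 then β ⟨j - 1, by omega⟩
  else if j = 0 then 0 else 1

/-- The open simplex `T = {0 = β₀ < β₁ < ⋯ < β_{k-1} < β_k = 1}` as a subset of `ℝ^{k-1}`. -/
def TSet (k : ℕ) : Set (Fin (k - 1) → ℝ) :=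
  {β | ∀ j < k, extendB k β j < extendB k β (j + 1)}

/-! ### Calculus on an open interval -/

lemma strictMonoOn_Ioo {a b : ℝ} {f f' : ℝ → ℝ}
    (hf : ∀ s ∈ Ioo a b, HasDerivAt f (f' s) s) (hpos : ∀ s ∈ Ioo a b, 0 < f' s) :
    StrictMonoOn f (Ioo a b) := by
  apply strictMonoOn_of_deriv_pos (convex_Ioo a b)
  · exact fun s hs => (hf s hs).continuousAt.continuousWithinAt
  · intro s hs
    rw [interior_Ioo] at hs
    rw [(hf s hs).deriv]
    exact hpos s hs

lemma lt_of_tendsto_left {a b l : ℝ} {f f' : ℝ → ℝ}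
    (hf : ∀ s ∈ Ioo a b, HasDerivAt f (f' s) s) (hpos : ∀ s ∈ Ioo a b, 0 < f' s)
    (hl : Tendsto f (𝓝[>] a) (𝓝 l)) : ∀ s ∈ Ioo a b, l < f s := by
  have hm : StrictMonoOn f (Ioo a b) := strictMonoOn_Ioo hf hpos
  intro s hs
  obtain ⟨t, hat, hts⟩ := exists_between hs.1
  have ht : t ∈ Ioo a b := ⟨hat, hts.trans hs.2⟩
  have h1 : l ≤ f t := by
    refine le_of_tendsto hl ?_
    filter_upwards [Ioo_mem_nhdsGT hat] with u hu
    exact (hm ⟨hu.1, hu.2.trans ht.2⟩ ht hu.2).le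
  exact h1.trans_lt (hm ht hs hts)

lemma lt_of_tendsto_right {a b l : ℝ} {f f' : ℝ → ℝ}
    (hf : ∀ s ∈ Ioo a b, HasDerivAt f (f' s) s) (hpos : ∀ s ∈ Ioo a b, 0 < f' s)
    (hl : Tendsto f (𝓝[<] b) (𝓝 l)) : ∀ s ∈ Ioo a b, f s < l := by
  have hm : StrictMonoOn f (Ioo a b) := strictMonoOn_Ioo hf hpos
  intro s hs
  obtain ⟨t, hst, htb⟩ := exists_between hs.2
  have ht : t ∈ Ioo a b := ⟨hs.1.trans hst, htb⟩
  have h1 : f t ≤ l := by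
    refine ge_of_tendsto hl ?_
    filter_upwards [Ioo_mem_nhdsLT htb] with u hu
    exact (hm ht ⟨ht.1.trans hu.1, hu.2⟩ hu.1).le
  exact (hm hs ht hst).trans_le h1

/-! ### Positive solutions of the radial equation -/

/-- The equation in divergence form: `(r ^ n u')' = r ^ n u`, with `n = m + 2`. -/
lemma hasDerivAt_flux {m : ℕ} {u' : ℝ → ℝ} {s u : ℝ} (hs : 0 < s)
    (h : HasDerivAt u' (u - ((m : ℝ) + 2) / s * u' s) s) :
    HasDerivAt (fun r => r ^ (m + 2) * u' r) (s ^ (m + 2) * u) s := by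
  refine ((hasDerivAt_pow (m + 2) s).mul h).congr_deriv ?_
  have := hs.ne'
  push_cast
  field_simp
  ring

/-- Up to the factor `r ^ n u²`, the quantity differentiated here is `(u'/u)'`. -/
lemma hasDerivAt_energy {m : ℕ} {u u' : ℝ → ℝ} {s : ℝ} (hs : 0 < s)
    (h : HasDerivAt u (u' s) s)
    (h' : HasDerivAt u' (u s - ((m : ℝ) + 2) / s * u' s) s) :
    HasDerivAt (fun r => r ^ (m + 2) * (u r ^ 2 - u' r ^ 2)
        - ((m : ℝ) + 2) * (r ^ (m + 1) * (u r * u' r)))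
      (((m : ℝ) + 2) * s ^ m * (u s * u' s)) s := by
  refine (((hasDerivAt_pow (m + 2) s).mul ((h.pow 2).sub (h'.pow 2))).sub
    (((hasDerivAt_pow (m + 1) s).mul (h.mul h')).const_mul ((m : ℝ) + 2))).congr_deriv ?_
  have := hs.ne'
  push_cast
  simp only [Pi.mul_apply, Pi.sub_apply, Pi.pow_apply]
  field_simp
  ring

lemma hasDerivAt_logDeriv {m : ℕ} {u u' : ℝ → ℝ} {s : ℝ} (hs : 0 < s) (hu : 0 < u s)
    (h : HasDerivAt u (u' s) s)
    (h' : HasDerivAt u' (u s - ((m : ℝ) + 2) / s * u' s) s) :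
    HasDerivAt (fun r => u' r / u r)
      ((s ^ (m + 2) * (u s ^ 2 - u' s ^ 2)
        - ((m : ℝ) + 2) * (s ^ (m + 1) * (u s * u' s))) / (s ^ (m + 2) * u s ^ 2)) s := by
  refine (h'.div h hu.ne').congr_deriv ?_
  have := hs.ne'
  have := hu.ne'
  field_simp
  ring

/-- The theorem for abstract `X`, `Z`. The limit hypotheses at `a` and `b` allow both Neumann
conditions and the singular end point `a = 0`, where `Z` is unbounded. -/
lemma core {m : ℕ} {a b c xa La xb zb : ℝ} {X X' Z Z' : ℝ → ℝ} (ha : 0 ≤ a) (hab : a < b)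
    (hX : ∀ s ∈ Ioo a b, HasDerivAt X (X' s) s)
    (hX' : ∀ s ∈ Ioo a b, HasDerivAt X' (X s - ((m : ℝ) + 2) / s * X' s) s)
    (hZ : ∀ s ∈ Ioo a b, HasDerivAt Z (Z' s) s)
    (hZ' : ∀ s ∈ Ioo a b, HasDerivAt Z' (Z s - ((m : ℝ) + 2) / s * Z' s) s)
    (Xpos : ∀ s ∈ Ioo a b, 0 < X s) (Zpos : ∀ s ∈ Ioo a b, 0 < Z s) (hc : 0 < c)
    (hW : ∀ s ∈ Ioo a b, s ^ (m + 2) * (X' s * Z s - X s * Z' s) = c)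
    (hXa : Tendsto X (𝓝[>] a) (𝓝 xa)) (hXa' : Tendsto X' (𝓝[>] a) (𝓝 La))
    (hLa : a * La = 0)
    (hXZa : Tendsto (fun s => s ^ (m + 2) * (X' s * Z s)) (𝓝[>] a) (𝓝 0))
    (hXb : Tendsto X (𝓝[<] b) (𝓝 xb))
    (hZb : Tendsto Z (𝓝[<] b) (𝓝 zb)) (hZb' : Tendsto Z' (𝓝[<] b) (𝓝 0)) :
    StrictAntiOn (fun s => deriv (fun t => 1 / (X t * Z t)) s / s ^ (m + 2)) (Ioo a b) ∧
    (∃! s, s ∈ Ioo a b ∧ deriv (fun t => 1 / (X t * Z t)) s / s ^ (m + 2) = 0) ∧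
    (∀ s ∈ Ioo a b, deriv (fun t => 1 / (X t * Z t)) s / s ^ (m + 2) = 0 →
      deriv X s / X s + deriv Z s / Z s = 0) := by
  have spos : ∀ s ∈ Ioo a b, 0 < s := fun s hs => ha.trans_lt hs.1
  have pow_a : ∀ k : ℕ, Tendsto (fun s : ℝ => s ^ k) (𝓝[>] a) (𝓝 (a ^ k)) := fun k =>
    ((continuous_pow k).tendsto a).mono_left nhdsWithin_le_nhds
  have pow_b : ∀ k : ℕ, Tendsto (fun s : ℝ => s ^ k) (𝓝[<] b) (𝓝 (b ^ k)) := fun k =>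
    ((continuous_pow k).tendsto b).mono_left nhdsWithin_le_nhds
  have X'pos : ∀ s ∈ Ioo a b, 0 < X' s := by
    intro s hs
    have := lt_of_tendsto_left (fun s hs => hasDerivAt_flux (spos s hs) (hX' s hs))
      (fun s hs => mul_pos (pow_pos (spos s hs) _) (Xpos s hs))
      ((pow_a (m + 2)).mul hXa') s hs
    rw [pow_succ, mul_assoc, hLa, mul_zero] at this
    exact pos_of_mul_pos_right this (pow_pos (spos s hs) _).le
  have Z'neg : ∀ s ∈ Ioo a b, Z' s < 0 := by
    intro s hs
    have := lt_of_tendsto_right (fun s hs => hasDerivAt_flux (spos s hs) (hZ' s hs))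
      (fun s hs => mul_pos (pow_pos (spos s hs) _) (Zpos s hs))
      ((pow_b (m + 2)).mul hZb') s hs
    rw [mul_zero] at this
    have hp := pow_pos (spos s hs) (m + 2)
    by_contra! hcon
    exact absurd this (not_lt.2 (mul_nonneg hp.le hcon))
  have EX : ∀ s ∈ Ioo a b, 0 < s ^ (m + 2) * (X s ^ 2 - X' s ^ 2)
        - ((m : ℝ) + 2) * (s ^ (m + 1) * (X s * X' s)) := by
    intro s hs
    have := lt_of_tendsto_left
      (fun s hs => hasDerivAt_energy (spos s hs) (hX s hs) (hX' s hs))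
      (fun s hs => mul_pos (mul_pos (by positivity) (pow_pos (spos s hs) _))
        (mul_pos (Xpos s hs) (X'pos s hs)))
      (((pow_a (m + 2)).mul ((hXa.pow 2).sub (hXa'.pow 2))).sub
        (((pow_a (m + 1)).mul (hXa.mul hXa')).const_mul ((m : ℝ) + 2))) s hs
    refine lt_of_le_of_lt ?_ this
    -- `a * La = 0` removes every term of the limit except `a ^ (m+2) * xa ^ 2`
    have e : a ^ (m + 2) * (xa ^ 2 - La ^ 2) - ((m : ℝ) + 2) * (a ^ (m + 1) * (xa * La))
        = a ^ (m + 2) * xa ^ 2 := by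
      have : a ^ (m + 2) * (xa ^ 2 - La ^ 2) - ((m : ℝ) + 2) * (a ^ (m + 1) * (xa * La))
        = a ^ (m + 2) * xa ^ 2 - a ^ m * (a * La) ^ 2
          - ((m : ℝ) + 2) * (a ^ m * xa * (a * La)) := by ring
      rw [this, hLa]; ring
    rw [e]; positivity
  have EZ : ∀ s ∈ Ioo a b, 0 < s ^ (m + 2) * (Z s ^ 2 - Z' s ^ 2)
        - ((m : ℝ) + 2) * (s ^ (m + 1) * (Z s * Z' s)) := by
    intro s hs
    have := lt_of_tendsto_right
      (fun s hs => (hasDerivAt_energy (spos s hs) (hZ s hs) (hZ' s hs)).neg)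
      (fun s hs => neg_pos.2 (mul_neg_of_pos_of_neg
        (mul_pos (by positivity) (pow_pos (spos s hs) _))
        (mul_neg_of_pos_of_neg (Zpos s hs) (Z'neg s hs))))
      (((pow_b (m + 2)).mul ((hZb.pow 2).sub (hZb'.pow 2))).sub
        (((pow_b (m + 1)).mul (hZb.mul hZb')).const_mul ((m : ℝ) + 2))).neg s hs
    have hb0 : 0 < b := ha.trans_lt hab
    have : 0 ≤ b ^ (m + 2) * zb ^ 2 := by positivity
    simp only [Pi.neg_apply] at *
    linarith
  have hp : StrictMonoOn (fun s => X' s / X s) (Ioo a b) :=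
    strictMonoOn_Ioo
      (fun s hs => hasDerivAt_logDeriv (spos s hs) (Xpos s hs) (hX s hs) (hX' s hs))
      (fun s hs => div_pos (EX s hs)
        (mul_pos (pow_pos (spos s hs) _) (pow_pos (Xpos s hs) _)))
  have hq : StrictMonoOn (fun s => Z' s / Z s) (Ioo a b) :=
    strictMonoOn_Ioo
      (fun s hs => hasDerivAt_logDeriv (spos s hs) (Zpos s hs) (hZ s hs) (hZ' s hs))
      (fun s hs => div_pos (EZ s hs)
        (mul_pos (pow_pos (spos s hs) _) (pow_pos (Zpos s hs) _)))
  have hφ : ∀ s ∈ Ioo a b, deriv (fun t => 1 / (X t * Z t)) s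
      = -(X' s * Z s + X s * Z' s) / (X s * Z s) ^ 2 := by
    intro s hs
    have h0 : X s * Z s ≠ 0 := (mul_pos (Xpos s hs) (Zpos s hs)).ne'
    have := ((hX s hs).mul (hZ s hs)).inv h0
    simp only [one_div]
    exact this.deriv
  have hφ2 : ∀ s ∈ Ioo a b, deriv (fun t => 1 / (X t * Z t)) s / s ^ (m + 2)
      = ((Z' s / Z s) ^ 2 - (X' s / X s) ^ 2) / c := by
    intro s hs
    rw [hφ s hs, ← hW s hs]
    have h1 := (Xpos s hs).ne'
    have h2 := (Zpos s hs).ne'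
    have h3 := (spos s hs).ne'
    have h4 : X' s * Z s - X s * Z' s ≠ 0 := by
      intro h
      have := hW s hs
      rw [h, mul_zero] at this
      exact hc.ne this
    field_simp
    ring
  have anti : StrictAntiOn (fun s => deriv (fun t => 1 / (X t * Z t)) s / s ^ (m + 2))
      (Ioo a b) := by
    intro s hs t ht hst
    simp only [hφ2 s hs, hφ2 t ht]
    have h1 := hp hs ht hst
    have h2 := hq hs ht hst
    have h3 : 0 < X' s / X s := div_pos (X'pos s hs) (Xpos s hs)
    have h4 : Z' t / Z t < 0 := div_neg_of_neg_of_pos (Z'neg t ht) (Zpos t ht)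
    simp only at h1 h2
    gcongr ?_ / c
    nlinarith
  refine ⟨anti, ?_, ?_⟩
  · have cont : ContinuousOn (fun s => s ^ (m + 2) * (X' s * Z s + X s * Z' s)) (Ioo a b) := by
      intro s hs
      exact ((continuous_pow (m + 2)).continuousAt.mul
        (((hX' s hs).continuousAt.mul (hZ s hs).continuousAt).add
        ((hX s hs).continuousAt.mul (hZ' s hs).continuousAt))).continuousWithinAt
    have nega : ∃ s ∈ Ioo a b, s ^ (m + 2) * (X' s * Z s + X s * Z' s) < 0 := by
      have h1 : ∀ᶠ s in 𝓝[>] a, s ^ (m + 2) * (X' s * Z s) < c / 2 :=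
        hXZa.eventually (gt_mem_nhds (half_pos hc))
      obtain ⟨s, h, hs⟩ := (h1.and (Ioo_mem_nhdsGT hab)).exists
      refine ⟨s, hs, ?_⟩
      have := hW s hs
      nlinarith
    have posb : ∃ s ∈ Ioo a b, 0 < s ^ (m + 2) * (X' s * Z s + X s * Z' s) := by
      have hlim := (pow_b (m + 2)).mul (hXb.mul hZb')
      simp only [mul_zero] at hlim
      have h1 : ∀ᶠ s in 𝓝[<] b, -(c / 2) < s ^ (m + 2) * (X s * Z' s) :=
        hlim.eventually (lt_mem_nhds (neg_lt_zero.2 (half_pos hc)))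
      obtain ⟨s, h, hs⟩ := (h1.and (Ioo_mem_nhdsLT hab)).exists
      refine ⟨s, hs, ?_⟩
      have := hW s hs
      nlinarith
    obtain ⟨s, hs, hs0⟩ := nega
    obtain ⟨t, ht, ht0⟩ := posb
    obtain ⟨r, hr, hr0⟩ := isPreconnected_Ioo.intermediate_value hs ht cont ⟨hs0.le, ht0.le⟩
    have hr1 : X' r * Z r + X r * Z' r = 0 :=
      (mul_eq_zero.1 hr0).resolve_left (pow_pos (spos r hr) _).ne'
    have hr2 : deriv (fun t => 1 / (X t * Z t)) r / r ^ (m + 2) = 0 := by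
      rw [hφ r hr, hr1]; simp
    exact ⟨r, ⟨hr, hr2⟩, fun y hy => anti.injOn hy.1 hr (hy.2.trans hr2.symm)⟩
  · intro s hs h
    have h1 := (Xpos s hs).ne'
    have h2 := (Zpos s hs).ne'
    have h3 := (spos s hs).ne'
    rw [hφ s hs, div_eq_zero_iff, div_eq_zero_iff] at h
    have h4 : X' s * Z s + X s * Z' s = 0 := by
      rcases h with (h | h) | h
      · linarith
      · exact absurd h (pow_ne_zero _ (mul_ne_zero h1 h2))
      · exact absurd h (pow_ne_zero _ h3)
    rw [(hX s hs).deriv, (hZ s hs).deriv]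
    field_simp
    linarith

/-! ### The derivatives of `ξ` and `ζ` -/

namespace GreenData

variable {m : ℕ} (d : GreenData (m + 3))

lemma hasDerivAt_of_smooth {S : Set ℝ} {f : ℝ → ℝ} {r : ℝ} (hf : ContDiffOn ℝ 2 f S)
    (hr : S ∈ 𝓝 r) : HasDerivAt f (deriv f r) r ∧ HasDerivAt (deriv f) (deriv (deriv f) r) r := by
  have h := hf.contDiffAt hr
  refine ⟨(h.differentiableAt (by norm_num)).hasDerivAt, ?_⟩
  have h1 : ContDiffOn ℝ 1 (deriv f) (interior S) :=
    (hf.mono interior_subset).deriv_of_isOpen isOpen_interior (by norm_num)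
  exact ((h1.contDiffAt (interior_mem_nhds.2 hr)).differentiableAt (by norm_num)).hasDerivAt

lemma xi_hasDerivAt {r : ℝ} (hr : r ∈ Ioo (0 : ℝ) 1) : HasDerivAt d.xi (deriv d.xi r) r :=
  (hasDerivAt_of_smooth d.xi_smooth (Icc_mem_nhds hr.1 hr.2)).1

lemma zeta_hasDerivAt {r : ℝ} (hr : r ∈ Ioo (0 : ℝ) 1) :
    HasDerivAt d.zeta (deriv d.zeta r) r :=
  (hasDerivAt_of_smooth d.zeta_smooth (Ioc_mem_nhds hr.1 hr.2)).1

lemma xi_hasDerivAt' {r : ℝ} (hr : r ∈ Ioo (0 : ℝ) 1) :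
    HasDerivAt (deriv d.xi) (d.xi r - ((m : ℝ) + 2) / r * deriv d.xi r) r := by
  convert (hasDerivAt_of_smooth d.xi_smooth (Icc_mem_nhds hr.1 hr.2)).2 using 1
  have := d.xi_ode r hr
  push_cast at this
  rw [show (m : ℝ) + 3 - 1 = m + 2 by ring] at this
  linarith

lemma zeta_hasDerivAt' {r : ℝ} (hr : r ∈ Ioo (0 : ℝ) 1) :
    HasDerivAt (deriv d.zeta) (d.zeta r - ((m : ℝ) + 2) / r * deriv d.zeta r) r := by
  convert (hasDerivAt_of_smooth d.zeta_smooth (Ioc_mem_nhds hr.1 hr.2)).2 using 1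
  have := d.zeta_ode r hr
  push_cast at this
  rw [show (m : ℝ) + 3 - 1 = m + 2 by ring] at this
  linarith

lemma xi_derivWithin_continuousOn : ContinuousOn (derivWithin d.xi (Icc 0 1)) (Icc 0 1) :=
  d.xi_smooth.continuousOn_derivWithin (uniqueDiffOn_Icc one_pos) (by norm_num)

lemma zeta_derivWithin_continuousOn : ContinuousOn (derivWithin d.zeta (Ioc 0 1)) (Ioc 0 1) :=
  d.zeta_smooth.continuousOn_derivWithin (uniqueDiffOn_Ioc 0 1) (by norm_num)

lemma xi_deriv_eq {r : ℝ} (hr : r ∈ Ioc (0 : ℝ) 1) :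
    deriv d.xi r = derivWithin d.xi (Icc 0 1) r := by
  rcases hr.2.lt_or_eq with h | rfl
  · exact (derivWithin_of_mem_nhds (Icc_mem_nhds hr.1 h)).symm
  · -- by the Wronskian identity `deriv ξ 1 ≠ 0`, so `ξ` is differentiable at `1`
    have hw := d.wronskian 1 hr
    rw [d.zeta_deriv_one] at hw
    have hne : deriv d.xi 1 ≠ 0 := by
      intro h
      rw [h] at hw
      simp at hw
    exact ((differentiableAt_of_deriv_ne_zero hne).derivWithin
      (uniqueDiffOn_Icc one_pos 1 ⟨zero_le_one, le_rfl⟩)).symm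

lemma zeta_deriv_eq {r : ℝ} (hr : r ∈ Ioc (0 : ℝ) 1) :
    deriv d.zeta r = derivWithin d.zeta (Ioc 0 1) r := by
  rcases hr.2.lt_or_eq with h | rfl
  · exact (derivWithin_of_mem_nhds (Ioc_mem_nhds hr.1 h)).symm
  · -- compare the Wronskian identity at `1` with its limit at `1` from the left
    have hsub : Ioo (0 : ℝ) 1 ⊆ Ioc 0 1 := Ioo_subset_Ioc_self
    have hsub' : Ioo (0 : ℝ) 1 ⊆ Icc 0 1 := Ioo_subset_Icc_self
    have h1 : Tendsto (derivWithin d.xi (Icc 0 1)) (𝓝[Ioo 0 1] 1)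
        (𝓝 (derivWithin d.xi (Icc 0 1) 1)) :=
      (d.xi_derivWithin_continuousOn 1 ⟨zero_le_one, le_rfl⟩).mono_left (nhdsWithin_mono _ hsub')
    have h2 : Tendsto (derivWithin d.zeta (Ioc 0 1)) (𝓝[Ioo 0 1] 1)
        (𝓝 (derivWithin d.zeta (Ioc 0 1) 1)) :=
      (d.zeta_derivWithin_continuousOn 1 hr).mono_left (nhdsWithin_mono _ hsub)
    have h3 : Tendsto d.xi (𝓝[Ioo 0 1] 1) (𝓝 (d.xi 1)) :=
      (d.xi_smooth.continuousOn 1 ⟨zero_le_one, le_rfl⟩).mono_left (nhdsWithin_mono _ hsub')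
    have h4 : Tendsto d.zeta (𝓝[Ioo 0 1] 1) (𝓝 (d.zeta 1)) :=
      (d.zeta_smooth.continuousOn 1 hr).mono_left (nhdsWithin_mono _ hsub)
    have h5 : Tendsto (fun s : ℝ => s ^ (m + 3 - 1)) (𝓝[Ioo 0 1] 1) (𝓝 (1 ^ (m + 3 - 1))) :=
      ((continuous_pow _).tendsto 1).mono_left nhdsWithin_le_nhds
    have hlim := h5.mul ((h1.mul h4).sub (h3.mul h2))
    have : (𝓝[Ioo (0 : ℝ) 1] 1).NeBot := right_nhdsWithin_Ioo_neBot one_pos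
    have hconst : Tendsto (fun s : ℝ => s ^ (m + 3 - 1) *
        (derivWithin d.xi (Icc 0 1) s * d.zeta s - d.xi s * derivWithin d.zeta (Ioc 0 1) s))
        (𝓝[Ioo 0 1] 1) (𝓝 1) := by
      refine tendsto_const_nhds.congr' ?_
      filter_upwards [self_mem_nhdsWithin] with s hs
      rw [derivWithin_of_mem_nhds (Icc_mem_nhds hs.1 hs.2),
        derivWithin_of_mem_nhds (Ioc_mem_nhds hs.1 hs.2), d.wronskian s (hsub hs)]
    have heq := tendsto_nhds_unique hlim hconst
    have hw := d.wronskian 1 hr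
    rw [d.zeta_deriv_one, d.xi_deriv_eq hr] at hw
    rw [d.zeta_deriv_one]
    have hx := d.xi_pos 1 ⟨zero_le_one, le_rfl⟩
    simp only [one_pow, one_mul, mul_zero, sub_zero] at heq hw
    have : d.xi 1 * derivWithin d.zeta (Ioc 0 1) 1 = 0 := by linarith
    exact ((mul_eq_zero.1 this).resolve_left hx.ne').symm

/-- The two-sided derivatives `deriv ξ`, `deriv ζ` are the genuine one-sided ones on `(0,1]`,
including the end point `1`, hence continuous there. -/
lemma continuousOn_deriv :
    ContinuousOn (deriv d.xi) (Ioc 0 1) ∧ ContinuousOn (deriv d.zeta) (Ioc 0 1) :=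
  ⟨(d.xi_derivWithin_continuousOn.mono Ioc_subset_Icc_self).congr fun _ hr => d.xi_deriv_eq hr,
    d.zeta_derivWithin_continuousOn.congr fun _ hr => d.zeta_deriv_eq hr⟩

lemma xi_deriv_tendsto_zero :
    ∃ L, Tendsto (deriv d.xi) (𝓝[>] 0) (𝓝 L) := by
  refine ⟨derivWithin d.xi (Icc 0 1) 0, ?_⟩
  have h : Tendsto (derivWithin d.xi (Icc 0 1)) (𝓝[Ioo 0 1] 0)
      (𝓝 (derivWithin d.xi (Icc 0 1) 0)) :=
    (d.xi_derivWithin_continuousOn 0 ⟨le_rfl, zero_le_one⟩).mono_left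
      (nhdsWithin_mono _ Ioo_subset_Icc_self)
  rw [nhdsWithin_Ioo_eq_nhdsGT one_pos] at h
  refine h.congr' ?_
  filter_upwards [Ioo_mem_nhdsGT one_pos] with s hs
  exact (d.xi_deriv_eq ⟨hs.1, hs.2.le⟩).symm

lemma pow_mul_zeta_tendsto : Tendsto (fun s => s ^ (m + 2) * d.zeta s) (𝓝[>] 0) (𝓝 0) := by
  have h := (tendsto_id.mono_left (nhdsWithin_le_nhds (s := Ioi (0 : ℝ)))).mul d.zeta_lim
  simp only [id, zero_mul, show m + 3 - 2 = m + 1 by omega] at h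
  refine h.congr fun s => ?_
  ring

lemma tendsto_left {f : ℝ → ℝ} {a : ℝ} (hf : ContinuousOn f (Ioc 0 1)) (ha : 0 < a)
    (ha1 : a < 1) : Tendsto f (𝓝[>] a) (𝓝 (f a)) :=
  ((hf.continuousAt (Ioc_mem_nhds ha ha1)).tendsto).mono_left nhdsWithin_le_nhds

lemma tendsto_right {f : ℝ → ℝ} {b : ℝ} (hf : ContinuousOn f (Ioc 0 1)) (hb : 0 < b)
    (hb1 : b ≤ 1) : Tendsto f (𝓝[<] b) (𝓝 (f b)) := by
  have h : Tendsto f (𝓝[Ioo 0 b] b) (𝓝 (f b)) :=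
    (hf b ⟨hb, hb1⟩).mono_left
      (nhdsWithin_mono _ fun s hs => ⟨hs.1, hs.2.le.trans hb1⟩)
  rwa [nhdsWithin_Ioo_eq_nhdsLT hb] at h

lemma flux_xi_lt {a b : ℝ} (ha : 0 < a) (hab : a < b) (hb : b ≤ 1) :
    a ^ (m + 2) * deriv d.xi a < b ^ (m + 2) * deriv d.xi b := by
  have hc : ContinuousOn (fun r => r ^ (m + 2) * deriv d.xi r) (Ioc 0 1) :=
    (continuous_pow _).continuousOn.mul d.continuousOn_deriv.1
  refine strictMonoOn_of_deriv_pos (convex_Ioc 0 1) hc (fun s hs => ?_)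
    ⟨ha, hab.le.trans hb⟩ ⟨ha.trans hab, hb⟩ hab
  rw [interior_Ioc] at hs
  rw [(hasDerivAt_flux hs.1 (d.xi_hasDerivAt' hs)).deriv]
  exact mul_pos (pow_pos hs.1 _) (d.xi_pos s ⟨hs.1.le, hs.2.le⟩)

lemma flux_zeta_lt {a b : ℝ} (ha : 0 < a) (hab : a < b) (hb : b ≤ 1) :
    a ^ (m + 2) * deriv d.zeta a < b ^ (m + 2) * deriv d.zeta b := by
  have hc : ContinuousOn (fun r => r ^ (m + 2) * deriv d.zeta r) (Ioc 0 1) :=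
    (continuous_pow _).continuousOn.mul d.continuousOn_deriv.2
  refine strictMonoOn_of_deriv_pos (convex_Ioc 0 1) hc (fun s hs => ?_)
    ⟨ha, hab.le.trans hb⟩ ⟨ha.trans hab, hb⟩ hab
  rw [interior_Ioc] at hs
  rw [(hasDerivAt_flux hs.1 (d.zeta_hasDerivAt' hs)).deriv]
  exact mul_pos (pow_pos hs.1 _) (d.zeta_pos s ⟨hs.1, hs.2.le⟩)

lemma xi_deriv_pos {r : ℝ} (hr : r ∈ Ioo (0 : ℝ) 1) : 0 < deriv d.xi r := by
  obtain ⟨L, hL⟩ := d.xi_deriv_tendsto_zero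
  have h0 : Tendsto (fun s : ℝ => s ^ (m + 2)) (𝓝[>] 0) (𝓝 (0 ^ (m + 2))) :=
    ((continuous_pow (m + 2)).tendsto 0).mono_left nhdsWithin_le_nhds
  have := lt_of_tendsto_left (fun s hs => hasDerivAt_flux (And.left hs) (d.xi_hasDerivAt' hs))
    (fun s hs => mul_pos (pow_pos (And.left hs) _) (d.xi_pos s ⟨hs.1.le, hs.2.le⟩))
    (h0.mul hL) r hr
  rw [zero_pow (by omega), zero_mul] at this
  exact pos_of_mul_pos_right this (pow_pos hr.1 _).le

lemma zeta_deriv_neg {r : ℝ} (hr : r ∈ Ioo (0 : ℝ) 1) : deriv d.zeta r < 0 := by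
  have := d.flux_zeta_lt hr.1 hr.2 le_rfl
  rw [d.zeta_deriv_one, mul_zero] at this
  by_contra! hcon
  exact absurd this (not_lt.2 (mul_nonneg (pow_pos hr.1 _).le hcon))

/-- The quantity under the square root in `ξ_{[a,b]}` and `ζ_{[a,b]}` is positive. -/
lemma det_pos {a b : ℝ} (ha : 0 < a) (hab : a < b) (hb : b < 1) :
    0 < deriv d.xi a * deriv d.zeta b - deriv d.xi b * deriv d.zeta a := by
  have h1 := d.flux_xi_lt ha hab hb.le
  have h2 := d.flux_zeta_lt ha hab hb.le
  have hpa := pow_pos ha (m + 2)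
  have hpb := pow_pos (ha.trans hab) (m + 2)
  have h3 := mul_pos hpa (d.xi_deriv_pos ⟨ha, hab.trans hb⟩)
  have h4 := mul_neg_of_pos_of_neg hpb (d.zeta_deriv_neg ⟨ha.trans hab, hb⟩)
  have key : 0 < (a ^ (m + 2) * b ^ (m + 2)) *
      (deriv d.xi a * deriv d.zeta b - deriv d.xi b * deriv d.zeta a) := by
    nlinarith
  exact pos_of_mul_pos_right key (mul_pos hpa hpb).le

/-! ### Combinations of `ξ` and `ζ` -/

/-- `core` for `X = α ξ + β ζ` and `Z = γ ξ + δ ζ`, with the Neumann conditions `X'(a) = 0`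
(replaced by `β = 0` if `a = 0`) and `Z'(b) = 0`. -/
lemma core_comb {a b α β γ δ : ℝ} (ha : 0 ≤ a) (hab : a < b) (hb : b ≤ 1)
    {X Z : ℝ → ℝ} (hX : X = fun r => α * d.xi r + β * d.zeta r)
    (hZ : Z = fun r => γ * d.xi r + δ * d.zeta r)
    (hα : 0 < α) (hβ : 0 ≤ β) (hγ : 0 ≤ γ) (hδ : 0 < δ) (hdet : 0 < α * δ - β * γ)
    (h0 : a = 0 → β = 0) (hXa : a ≠ 0 → α * deriv d.xi a + β * deriv d.zeta a = 0)
    (hZb : γ * deriv d.xi b + δ * deriv d.zeta b = 0) :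
    StrictAntiOn (fun s => deriv (fun t => 1 / (X t * Z t)) s / s ^ (m + 2)) (Ioo a b) ∧
    (∃! s, s ∈ Ioo a b ∧ deriv (fun t => 1 / (X t * Z t)) s / s ^ (m + 2) = 0) ∧
    (∀ s ∈ Ioo a b, deriv (fun t => 1 / (X t * Z t)) s / s ^ (m + 2) = 0 →
      deriv X s / X s + deriv Z s / Z s = 0) := by
  subst hX hZ
  have hsub : ∀ s ∈ Ioo a b, s ∈ Ioo (0 : ℝ) 1 := fun s hs =>
    ⟨ha.trans_lt hs.1, hs.2.trans_le hb⟩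
  have hb0 : 0 < b := ha.trans_lt hab
  obtain ⟨cx', cz'⟩ := d.continuousOn_deriv
  have cx : ContinuousOn d.xi (Ioc 0 1) := d.xi_smooth.continuousOn.mono Ioc_subset_Icc_self
  have cz : ContinuousOn d.zeta (Ioc 0 1) := d.zeta_smooth.continuousOn
  -- the limits at `a`; for `a = 0` the singular `ζ` is absent from `X` as `β = 0`
  obtain ⟨xa, La, hxa, hLa, haL, hXZ⟩ : ∃ xa La,
      Tendsto (fun r => α * d.xi r + β * d.zeta r) (𝓝[>] a) (𝓝 xa) ∧
      Tendsto (fun r => α * deriv d.xi r + β * deriv d.zeta r) (𝓝[>] a) (𝓝 La) ∧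
      a * La = 0 ∧ Tendsto (fun s => s ^ (m + 2) * ((α * deriv d.xi s + β * deriv d.zeta s) *
        (γ * d.xi s + δ * d.zeta s))) (𝓝[>] a) (𝓝 0) := by
    rcases ha.eq_or_lt with rfl | ha'
    · obtain ⟨L, hL⟩ := d.xi_deriv_tendsto_zero
      rw [h0 rfl]
      simp only [zero_mul, add_zero]
      refine ⟨_, _, d.xi_lim.const_mul α, hL.const_mul α, trivial, ?_⟩
      have hp : Tendsto (fun s : ℝ => s ^ (m + 2)) (𝓝[>] 0) (𝓝 (0 ^ (m + 2))) :=
        ((continuous_pow (m + 2)).tendsto 0).mono_left nhdsWithin_le_nhds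
      have := (hL.const_mul α).mul
        (((hp.mul d.xi_lim).const_mul γ).add (d.pow_mul_zeta_tendsto.const_mul δ))
      rw [zero_pow (by omega), zero_mul, mul_zero, mul_zero, add_zero, mul_zero] at this
      refine this.congr fun s => ?_
      ring
    · have ha1 : a < 1 := hab.trans_le hb
      have l1 := tendsto_left cx ha' ha1
      have l2 := tendsto_left cz ha' ha1
      have hL := ((tendsto_left cx' ha' ha1).const_mul α).add
        ((tendsto_left cz' ha' ha1).const_mul β)
      rw [hXa ha'.ne'] at hL
      refine ⟨_, 0, (l1.const_mul α).add (l2.const_mul β), hL, mul_zero a, ?_⟩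
      have hp : Tendsto (fun s : ℝ => s ^ (m + 2)) (𝓝[>] a) (𝓝 (a ^ (m + 2))) :=
        ((continuous_pow (m + 2)).tendsto a).mono_left nhdsWithin_le_nhds
      have := hp.mul (hL.mul ((l1.const_mul γ).add (l2.const_mul δ)))
      rwa [zero_mul, mul_zero] at this
  have r1 := tendsto_right cx hb0 hb
  have r2 := tendsto_right cz hb0 hb
  have r3 := ((tendsto_right cx' hb0 hb).const_mul γ).add
    ((tendsto_right cz' hb0 hb).const_mul δ)
  rw [hZb] at r3
  refine core (c := α * δ - β * γ) ha hab (X' := fun r => α * deriv d.xi r + β * deriv d.zeta r)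
    (Z' := fun r => γ * deriv d.xi r + δ * deriv d.zeta r)
    (fun s hs => ((d.xi_hasDerivAt (hsub s hs)).const_mul α).add
      ((d.zeta_hasDerivAt (hsub s hs)).const_mul β)) ?_
    (fun s hs => ((d.xi_hasDerivAt (hsub s hs)).const_mul γ).add
      ((d.zeta_hasDerivAt (hsub s hs)).const_mul δ)) ?_ ?_ ?_ hdet ?_ hxa hLa haL hXZ
    ((r1.const_mul α).add (r2.const_mul β)) ((r1.const_mul γ).add (r2.const_mul δ)) r3
  · intro s hs
    refine (((d.xi_hasDerivAt' (hsub s hs)).const_mul α).add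
      ((d.zeta_hasDerivAt' (hsub s hs)).const_mul β)).congr_deriv ?_
    ring
  · intro s hs
    refine (((d.xi_hasDerivAt' (hsub s hs)).const_mul γ).add
      ((d.zeta_hasDerivAt' (hsub s hs)).const_mul δ)).congr_deriv ?_
    ring
  · intro s hs
    have h1 := d.xi_pos s ⟨(hsub s hs).1.le, (hsub s hs).2.le⟩
    have h2 := d.zeta_pos s ⟨(hsub s hs).1, (hsub s hs).2.le⟩
    positivity
  · intro s hs
    have h1 := d.xi_pos s ⟨(hsub s hs).1.le, (hsub s hs).2.le⟩
    have h2 := d.zeta_pos s ⟨(hsub s hs).1, (hsub s hs).2.le⟩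
    positivity
  · intro s hs
    have hw := d.wronskian s ⟨(hsub s hs).1, (hsub s hs).2.le⟩
    simp only [show m + 3 - 1 = m + 2 by omega] at hw
    linear_combination (α * δ - β * γ) * hw

end GreenData

theorem statement4 {N : ℕ} (hN : 3 ≤ N) (d : GreenData N)
    (a b : ℝ) (ha : 0 ≤ a) (hab : a < b) (hb : b ≤ 1) :
    StrictAntiOn
      (fun s => deriv (fun t => 1 / (d.xiI a b t * d.zetaI a b t)) s / s ^ (N - 1))
      (Set.Ioo a b) ∧
    (∃! s, s ∈ Set.Ioo a b ∧
      deriv (fun t => 1 / (d.xiI a b t * d.zetaI a b t)) s / s ^ (N - 1) = 0) ∧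
    (∀ s ∈ Set.Ioo a b,
      deriv (fun t => 1 / (d.xiI a b t * d.zetaI a b t)) s / s ^ (N - 1) = 0 →
      d.ReflectionAt a b s) := by
  obtain ⟨m, rfl⟩ : ∃ m, N = m + 3 := ⟨N - 3, by omega⟩
  simp only [show m + 3 - 1 = m + 2 by omega]
  unfold GreenData.ReflectionAt
  by_cases ha0 : a = 0
  · by_cases hb1 : b = 1
    · refine d.core_comb (α := 1) (β := 0) (γ := 0) (δ := 1) ha hab hb ?_ ?_ one_pos le_rfl
        le_rfl one_pos (by norm_num) (fun _ => rfl) (fun h => absurd ha0 h) ?_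
      · simp [GreenData.xiI, ha0, hb1]
      · simp [GreenData.zetaI, ha0, hb1]
      · rw [hb1, d.zeta_deriv_one]; ring
    · have hb' : b ∈ Ioo (0 : ℝ) 1 := ⟨ha.trans_lt hab, lt_of_le_of_ne hb hb1⟩
      have hx := d.xi_deriv_pos hb'
      have hz := d.zeta_deriv_neg hb'
      refine d.core_comb (α := (deriv d.xi b)⁻¹) (β := 0) (γ := -deriv d.zeta b)
        (δ := deriv d.xi b) ha hab hb ?_ ?_ (inv_pos.2 hx) le_rfl
        (neg_nonneg.2 hz.le) hx ?_ (fun _ => rfl) (fun h => absurd ha0 h) (by ring)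
      · funext r
        simp only [GreenData.xiI, ha0, hb1, if_true, if_false]
        ring
      · funext r
        simp only [GreenData.zetaI, ha0, hb1, if_true, if_false]
        ring
      · rw [inv_mul_cancel₀ hx.ne']; norm_num
  · have ha' : a ∈ Ioo (0 : ℝ) 1 := ⟨lt_of_le_of_ne ha (Ne.symm ha0), hab.trans_le hb⟩
    have hxa := d.xi_deriv_pos ha'
    have hza := d.zeta_deriv_neg ha'
    by_cases hb1 : b = 1
    · refine d.core_comb (α := -deriv d.zeta a) (β := deriv d.xi a) (γ := 0)
        (δ := (-deriv d.zeta a)⁻¹) ha hab hb ?_ ?_ (neg_pos.2 hza) hxa.le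
        le_rfl (inv_pos.2 (neg_pos.2 hza)) ?_ (fun h => absurd h ha0) (fun _ => by ring) ?_
      · funext r
        simp only [GreenData.xiI, ha0, hb1, if_true, if_false]
        ring
      · funext r
        simp only [GreenData.zetaI, ha0, hb1, if_true, if_false]
        rw [inv_neg]
        ring
      · rw [mul_inv_cancel₀ (neg_pos.2 hza).ne']; norm_num
      · rw [hb1, d.zeta_deriv_one]; ring
    · have hb' : b ∈ Ioo (0 : ℝ) 1 := ⟨ha.trans_lt hab, lt_of_le_of_ne hb hb1⟩
      have hx := d.xi_deriv_pos hb'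
      have hz := d.zeta_deriv_neg hb'
      have hD := d.det_pos ha'.1 hab hb'.2
      set D := deriv d.xi a * deriv d.zeta b - deriv d.xi b * deriv d.zeta a with hDdef
      have hS := Real.sqrt_pos.2 hD
      refine d.core_comb (α := -deriv d.zeta a / √D) (β := deriv d.xi a / √D)
        (γ := -deriv d.zeta b / √D) (δ := deriv d.xi b / √D) ha hab hb ?_ ?_
        (div_pos (neg_pos.2 hza) hS) (div_pos hxa hS).le
        (div_pos (neg_pos.2 hz) hS).le (div_pos hx hS) ?_
        (fun h => absurd h ha0) (fun _ => by ring) (by ring)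
      · funext r
        simp only [GreenData.xiI, ha0, hb1, if_false, ← hDdef]
        ring
      · funext r
        simp only [GreenData.zetaI, ha0, hb1, if_false, ← hDdef]
        ring
      · have e : -deriv d.zeta a / √D * (deriv d.xi b / √D)
            - deriv d.xi a / √D * (-deriv d.zeta b / √D) = D / (√D * √D) := by
          rw [hDdef]; ring
        rw [e]
        exact div_pos hD (mul_pos hS hS)
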